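/- arXiv:1705.05934 — 3 statements merged into one kernel-verified Lean document; each statement's English description precedes it below -/
import Mathlib

section
/- Let ψ be a hyperexponential Laplace exponent that is not identically zero (σ > 0, or a ≠ 0, or N + N̂ ≥ 1) and let q > 0. Write M = N+1 if σ > 0 or (σ = 0 and a > 0) and M = N otherwise, and M̂ = N̂+1 if σ > 0 or (σ = 0 and a < 0) and M̂ = N̂ otherwise. Then for every z ∈ ℂ that is not one of the solutions ζ_1(q), …, ζ_M(q), −ζ̂_1(q), …, −ζ̂_{M̂}(q) and not one of the poles ρ_1, …, ρ_N, −ρ̂_1, …, −ρ̂_N̂, the partial fraction identity q/(q − ψ(z)) = qα − ∑_{ℓ=1}^{M} q/(ψ′(ζ_ℓ(q))·(z − ζ_ℓ(q))) − ∑_{ℓ=1}^{M̂} q/(ψ′(−ζ̂_ℓ(q))·(z + ζ̂_ℓ(q))) holds, where α = 1/(q + ∑_{ℓ=1}^N a_ℓ + ∑_{ℓ=1}^{N̂} â_ℓ) if σ = 0 and a = 0, and α = 0 otherwise. -/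
/-- The Laplace exponent of a hyperexponential Lévy process, extended to a rational
function on `ℂ`. -/
noncomputable def psi (σ A : ℝ) (N Nh : ℕ) (aa ρ ah ρh : ℕ → ℝ) (z : ℂ) : ℂ :=
  (σ : ℂ) ^ 2 * z ^ 2 / 2 + (A : ℂ) * z
    + z * ∑ ℓ ∈ Finset.Icc 1 N, (aa ℓ : ℂ) / ((ρ ℓ : ℂ) - z)
    - z * ∑ ℓ ∈ Finset.Icc 1 Nh, (ah ℓ : ℂ) / ((ρh ℓ : ℂ) + z)

open Polynomial in
lemma pf_deg (a : ℂ) (p : ℂ[X]) : (C a * p).degree ≤ p.degree := by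
  rw [← smul_eq_C_mul]
  exact degree_smul_le a p

open Polynomial in
/-- Partial fractions with simple roots. -/
lemma pf_aux {ι : Type*} [DecidableEq ι] (t : Finset ι) (r : ι → ℂ) (hr : Set.InjOn r t)
    (P Q : ℂ[X]) (hP : P.degree = t.card) (hroot : ∀ j ∈ t, P.eval (r j) = 0) (α : ℂ)
    (hQ : (Q - C α * P).degree < t.card) (z : ℂ) (hz : ∀ j ∈ t, z ≠ r j) :
    P.eval z ≠ 0 ∧ (∀ j ∈ t, (derivative P).eval (r j) ≠ 0) ∧
    Q.eval z / P.eval z = α + ∑ j ∈ t, Q.eval (r j) / ((derivative P).eval (r j) * (z - r j)) := by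
  have hP0 : P ≠ 0 := by
    rintro rfl
    simp at hP
  have hc : P.leadingCoeff ≠ 0 := leadingCoeff_ne_zero.mpr hP0
  have hPn : P = C P.leadingCoeff * Lagrange.nodal t r := by
    by_contra hne
    have h1 : P - C P.leadingCoeff * Lagrange.nodal t r = 0 := by
      apply Polynomial.eq_zero_of_degree_lt_of_eval_index_eq_zero t hr
      · rw [← hP]
        apply degree_sub_lt_left
        · rw [degree_C_mul hc, Lagrange.degree_nodal, hP]
        · exact hP0
        · rw [leadingCoeff_mul, leadingCoeff_C, (Lagrange.nodal_monic).leadingCoeff, mul_one]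
      · intro j hj
        simp [hroot j hj, Lagrange.eval_nodal_at_node hj]
    exact hne (sub_eq_zero.mp h1)
  have hev : (Lagrange.nodal t r).eval z ≠ 0 := by
    rw [Lagrange.eval_nodal]
    exact Finset.prod_ne_zero_iff.mpr fun j hj => sub_ne_zero.mpr (hz j hj)
  have hPz : P.eval z ≠ 0 := by
    rw [hPn, eval_mul, eval_C]
    exact mul_ne_zero hc hev
  have hder : ∀ j ∈ t, (derivative P).eval (r j) =
      P.leadingCoeff * (Lagrange.nodalWeight t r j)⁻¹ := by
    intro j hj
    rw [Lagrange.nodalWeight_eq_eval_derivative_nodal hj, inv_inv]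
    conv_lhs => rw [hPn]
    simp
  have hw : ∀ j ∈ t, Lagrange.nodalWeight t r j ≠ 0 := fun j hj =>
    Lagrange.nodalWeight_ne_zero hr hj
  refine ⟨hPz, ?_, ?_⟩
  · intro j hj
    rw [hder j hj]
    exact mul_ne_zero hc (inv_ne_zero (hw j hj))
  · have hI := Lagrange.eq_interpolate_of_eval_eq (fun j => Q.eval (r j)) hr hQ
      (by intro j hj; simp [hroot j hj])
    have h2 := Lagrange.eval_interpolate_not_at_node (fun j => Q.eval (r j)) hz
    rw [← hI, eval_sub, eval_mul, eval_C] at h2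
    have h3 : Q.eval z = α * P.eval z + (Lagrange.nodal t r).eval z *
      ∑ j ∈ t, Lagrange.nodalWeight t r j * (z - r j)⁻¹ * Q.eval (r j) := by
      rw [← h2]; ring
    rw [h3, add_div, mul_div_cancel_right₀ _ hPz]
    congr 1
    have h4 : P.eval z = P.leadingCoeff * (Lagrange.nodal t r).eval z := by
      conv_lhs => rw [hPn]
      simp
    rw [h4, mul_comm P.leadingCoeff, mul_div_mul_left _ _ hev, Finset.sum_div]
    apply Finset.sum_congr rfl
    intro j hj
    have := hw j hj
    have := sub_ne_zero.mpr (hz j hj)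
    rw [hder j hj]
    field_simp

open Polynomial in
/-- Partial fractions for the reciprocal of polynomial plus simple poles. -/
lemma pf_main {κ ι : Type*} [DecidableEq ι] [DecidableEq κ] (s : Finset κ) (p w : κ → ℂ)
    (t : Finset ι) (r : ι → ℂ) (hr : Set.InjOn r t) (B : ℂ[X]) (hB : B ≠ 0)
    (hcard : t.card = s.card + B.natDegree) (f : ℂ → ℂ)
    (hf : ∀ z, (∀ i ∈ s, z ≠ p i) → f z = B.eval z - ∑ i ∈ s, w i / (z - p i))
    (hrp : ∀ j ∈ t, ∀ i ∈ s, r j ≠ p i) (hfr : ∀ j ∈ t, f (r j) = 0) (α : ℂ)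
    (hα : (B.natDegree = 0 ∧ α * B.coeff 0 = 1) ∨ (0 < B.natDegree ∧ α = 0))
    (z : ℂ) (hz : ∀ j ∈ t, z ≠ r j) (hzp : ∀ i ∈ s, z ≠ p i) :
    1 / f z = α + ∑ j ∈ t, 1 / (deriv f (r j) * (z - r j)) := by
  set Q : ℂ[X] := Lagrange.nodal s p with hQdef
  set R : ℂ[X] := ∑ i ∈ s, C (w i) * Lagrange.nodal (s.erase i) p with hRdef
  set P : ℂ[X] := B * Q - R with hPdef
  have hQd : Q.degree = s.card := Lagrange.degree_nodal
  have hRd : R.degree < s.card := by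
    rw [hRdef]
    refine (Polynomial.degree_sum_le _ _).trans_lt ?_
    rw [Finset.sup_lt_iff (WithBot.bot_lt_coe _)]
    intro i hi
    refine (pf_deg _ _).trans_lt ?_
    rw [Lagrange.degree_nodal]
    exact_mod_cast Finset.card_erase_lt_of_mem hi
  have hBQ : (B * Q).degree = t.card := by
    rw [degree_mul, hQd, degree_eq_natDegree hB, hcard]
    push_cast
    ring
  have hle : (s.card : WithBot ℕ) ≤ t.card := by
    rw [hcard]; exact_mod_cast Nat.le_add_right _ _
  have hPd : P.degree = t.card := by
    rw [hPdef, degree_sub_eq_left_of_degree_lt, hBQ]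
    rw [hBQ]
    exact hRd.trans_le hle
  have hQne : ∀ z, (∀ i ∈ s, z ≠ p i) → Q.eval z ≠ 0 := by
    intro z hz
    rw [hQdef, Lagrange.eval_nodal]
    exact Finset.prod_ne_zero_iff.mpr fun j hj => sub_ne_zero.mpr (hz j hj)
  have hfPQ : ∀ z, (∀ i ∈ s, z ≠ p i) → f z = P.eval z / Q.eval z := by
    intro z hz
    rw [hf z hz, eq_div_iff (hQne z hz), hPdef, eval_sub, eval_mul, sub_mul, hRdef,
      eval_finsetSum, Finset.sum_mul]
    congr 1
    apply Finset.sum_congr rfl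
    intro i hi
    have h0 := sub_ne_zero.mpr (hz i hi)
    rw [hQdef, Lagrange.nodal_eq_mul_nodal_erase hi]
    simp only [eval_mul, eval_sub, eval_X, eval_C]
    field_simp
  have hroot : ∀ j ∈ t, P.eval (r j) = 0 := by
    intro j hj
    have := hfr j hj
    rw [hfPQ _ (hrp j hj), div_eq_zero_iff] at this
    exact this.resolve_right (hQne _ (hrp j hj))
  have hQα : (Q - C α * P).degree < t.card := by
    rcases hα with ⟨h0, h1⟩ | ⟨h0, rfl⟩
    · have hBC : B = C (B.coeff 0) := eq_C_of_natDegree_eq_zero h0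
      have : Q - C α * P = C α * R := by
        have h2 : C α * C (B.coeff 0) = (1 : ℂ[X]) := by rw [← C_mul, h1, C_1]
        rw [← hBC] at h2
        rw [hPdef]
        linear_combination (-Q) * h2
      rw [this]
      exact ((pf_deg _ _).trans_lt hRd).trans_le hle
    · simp only [C_0, zero_mul, sub_zero]
      rw [hQd, hcard]
      exact_mod_cast Nat.lt_add_of_pos_right h0
  obtain ⟨-, -, h⟩ := pf_aux t r hr P Q hPd hroot α hQα z hz
  rw [hfPQ z hzp, one_div_div, h]
  congr 1
  apply Finset.sum_congr rfl
  intro j hj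
  have hQj := hQne _ (hrp j hj)
  have hd : deriv f (r j) = (derivative P).eval (r j) / Q.eval (r j) := by
    have hev : f =ᶠ[nhds (r j)] fun z => P.eval z / Q.eval z := by
      have : ∀ᶠ x in nhds (r j), ∀ i ∈ s, x ≠ p i := by
        rw [Filter.eventually_all_finset]
        intro i hi
        exact isOpen_ne.mem_nhds (hrp j hj i hi)
      filter_upwards [this] with x hx using hfPQ x hx
    rw [hev.deriv_eq]
    have := ((P.hasDerivAt (r j)).div (Q.hasDerivAt (r j)) hQj).deriv
    rw [hroot j hj] at this
    refine Eq.trans this ?_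
    field_simp
    ring
  rw [hd, div_mul_eq_mul_div, one_div_div]

lemma side_aux (N M : ℕ) (ρ ζ : ℕ → ℝ) (hρ0 : ρ 0 = 0)
    (hmono : ∀ i j, i < j → j ≤ N → ρ i < ρ j) (hM : M ≤ N + 1)
    (h1 : ∀ i ∈ Finset.Icc 1 M, ρ (i - 1) < ζ i ∧ (i ≤ N → ζ i < ρ i)) :
    (∀ i ∈ Finset.Icc 1 N, 0 < ρ i) ∧ (∀ i ∈ Finset.Icc 1 M, 0 < ζ i) ∧
    (∀ i ∈ Finset.Icc 1 M, ∀ j ∈ Finset.Icc 1 M, ζ i = ζ j → i = j) ∧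
    (∀ i ∈ Finset.Icc 1 M, ∀ j ∈ Finset.Icc 1 N, ζ i ≠ ρ j) := by
  have hle : ∀ i j, i ≤ j → j ≤ N → ρ i ≤ ρ j := by
    intro i j hij hj
    rcases hij.eq_or_lt with rfl | h
    · exact le_rfl
    · exact (hmono i j h hj).le
  have hlt : ∀ i ∈ Finset.Icc 1 M, ∀ j ∈ Finset.Icc 1 M, i < j → ζ i < ζ j := by
    intro i hi j hj hij
    have a := h1 i hi
    have b := h1 j hj
    rw [Finset.mem_Icc] at hi hj
    have := hle i (j - 1) (by omega) (by omega)
    linarith [a.2 (by omega), b.1]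
  refine ⟨?_, ?_, ?_, ?_⟩
  · intro i hi
    rw [Finset.mem_Icc] at hi
    have := hmono 0 i (by omega) hi.2
    linarith
  · intro i hi
    have a := h1 i hi
    rw [Finset.mem_Icc] at hi
    have := hle 0 (i - 1) (by omega) (by omega)
    linarith [a.1]
  · intro i hi j hj h
    rcases lt_trichotomy i j with hl | hl | hl
    · exact absurd h (hlt i hi j hj hl).ne
    · exact hl
    · exact absurd h (hlt j hj i hi hl).ne'
  · intro i hi j hj
    have a := h1 i hi
    rw [Finset.mem_Icc] at hi hj
    by_cases hji : j < i
    · have := hle j (i - 1) (by omega) (by omega)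
      exact (by linarith [a.1] : ρ j < ζ i).ne'
    · have := hle i j (by omega) (by omega)
      exact (by linarith [a.2 (by omega)] : ζ i < ρ j).ne

/-- Partial fraction decomposition of `q/(q - ψ(z))` in terms of the solutions of
`ψ = q` (with multiplicities `M = N+1` or `N`, `M̂ = N̂+1` or `N̂` depending on `σ, a`). -/
theorem partial_fraction_decomposition
    (σ A : ℝ) (N Nh : ℕ) (aa ρ ah ρh : ℕ → ℝ)
    (hσ : 0 ≤ σ)
    (hpos : ∀ ℓ ∈ Finset.Icc 1 N, 0 < aa ℓ)
    (hposh : ∀ ℓ ∈ Finset.Icc 1 Nh, 0 < ah ℓ)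
    (hρ0 : ρ 0 = 0) (hρh0 : ρh 0 = 0)
    (hmono : ∀ i j, i < j → j ≤ N → ρ i < ρ j)
    (hmonoh : ∀ i j, i < j → j ≤ Nh → ρh i < ρh j)
    (hnondeg : 0 < σ ∨ A ≠ 0 ∨ 1 ≤ N + Nh)
    (q : ℝ) (hq : 0 < q)
    -- the solutions ζ_1, …, ζ_M and -ζ̂_1, …, -ζ̂_M̂ of ψ = q, as given by the
    -- interlacing property
    (ζ ζh : ℕ → ℝ)
    (hζ : ∀ ℓ ∈ Finset.Icc 1 N, ζ ℓ ∈ Set.Ioo (ρ (ℓ - 1)) (ρ ℓ) ∧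
        psi σ A N Nh aa ρ ah ρh (ζ ℓ : ℂ) = (q : ℂ))
    (hζtop : (0 < σ ∨ (σ = 0 ∧ 0 < A)) → ρ N < ζ (N + 1) ∧
        psi σ A N Nh aa ρ ah ρh (ζ (N + 1) : ℂ) = (q : ℂ))
    (hζh : ∀ ℓ ∈ Finset.Icc 1 Nh, -(ζh ℓ) ∈ Set.Ioo (-(ρh ℓ)) (-(ρh (ℓ - 1))) ∧
        psi σ A N Nh aa ρ ah ρh (-(ζh ℓ : ℝ) : ℂ) = (q : ℂ))
    (hζhtop : (0 < σ ∨ (σ = 0 ∧ A < 0)) → -(ζh (Nh + 1)) < -(ρh Nh) ∧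
        psi σ A N Nh aa ρ ah ρh (-(ζh (Nh + 1) : ℝ) : ℂ) = (q : ℂ)) :
    ∀ z : ℂ,
      (∀ ℓ ∈ Finset.Icc 1 (if 0 < σ ∨ (σ = 0 ∧ 0 < A) then N + 1 else N),
        z ≠ (ζ ℓ : ℂ)) →
      (∀ ℓ ∈ Finset.Icc 1 (if 0 < σ ∨ (σ = 0 ∧ A < 0) then Nh + 1 else Nh),
        z ≠ (-(ζh ℓ : ℝ) : ℂ)) →
      (∀ ℓ ∈ Finset.Icc 1 N, z ≠ (ρ ℓ : ℂ)) →
      (∀ ℓ ∈ Finset.Icc 1 Nh, z ≠ (-(ρh ℓ : ℝ) : ℂ)) →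
      (q : ℂ) / ((q : ℂ) - psi σ A N Nh aa ρ ah ρh z)
        = (q : ℂ) *
            (if σ = 0 ∧ A = 0 then
              ((1 / (q + (∑ ℓ ∈ Finset.Icc 1 N, aa ℓ) + ∑ ℓ ∈ Finset.Icc 1 Nh, ah ℓ) : ℝ) : ℂ)
            else 0)
          - (∑ ℓ ∈ Finset.Icc 1 (if 0 < σ ∨ (σ = 0 ∧ 0 < A) then N + 1 else N),
              (q : ℂ) / (deriv (psi σ A N Nh aa ρ ah ρh) (ζ ℓ : ℂ) * (z - (ζ ℓ : ℂ))))
          - ∑ ℓ ∈ Finset.Icc 1 (if 0 < σ ∨ (σ = 0 ∧ A < 0) then Nh + 1 else Nh),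
              (q : ℂ) / (deriv (psi σ A N Nh aa ρ ah ρh) (-(ζh ℓ : ℝ) : ℂ) * (z + (ζh ℓ : ℂ))) := by
  intro z hz1 hz2 hz3 hz4
  set M := if 0 < σ ∨ (σ = 0 ∧ 0 < A) then N + 1 else N with hM
  set Mh := if 0 < σ ∨ (σ = 0 ∧ A < 0) then Nh + 1 else Nh with hMh
  set f : ℂ → ℂ := fun x => (q : ℂ) - psi σ A N Nh aa ρ ah ρh x with hfdef
  have hMle : M ≤ N + 1 := by rw [hM]; split_ifs <;> omega
  have hMhle : Mh ≤ Nh + 1 := by rw [hMh]; split_ifs <;> omega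
  have H : ∀ i ∈ Finset.Icc 1 M, (ρ (i - 1) < ζ i ∧ (i ≤ N → ζ i < ρ i)) ∧
      psi σ A N Nh aa ρ ah ρh (ζ i : ℂ) = (q : ℂ) := by
    intro i hi
    rw [Finset.mem_Icc] at hi
    by_cases hN : i ≤ N
    · have := hζ i (Finset.mem_Icc.mpr ⟨hi.1, hN⟩)
      exact ⟨⟨this.1.1, fun _ => this.1.2⟩, this.2⟩
    · have hiN : i = N + 1 := by omega
      have hc : 0 < σ ∨ (σ = 0 ∧ 0 < A) := by
        by_contra hc
        rw [hM, if_neg hc] at hi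
        omega
      subst hiN
      exact ⟨⟨(hζtop hc).1, fun h => absurd h hN⟩, (hζtop hc).2⟩
  have Hh : ∀ i ∈ Finset.Icc 1 Mh, (ρh (i - 1) < ζh i ∧ (i ≤ Nh → ζh i < ρh i)) ∧
      psi σ A N Nh aa ρ ah ρh (-(ζh i : ℝ) : ℂ) = (q : ℂ) := by
    intro i hi
    rw [Finset.mem_Icc] at hi
    by_cases hN : i ≤ Nh
    · have := hζh i (Finset.mem_Icc.mpr ⟨hi.1, hN⟩)
      exact ⟨⟨neg_lt_neg_iff.mp this.1.2, fun _ => neg_lt_neg_iff.mp this.1.1⟩, this.2⟩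
    · have hiN : i = Nh + 1 := by omega
      have hc : 0 < σ ∨ (σ = 0 ∧ A < 0) := by
        by_contra hc
        rw [hMh, if_neg hc] at hi
        omega
      subst hiN
      exact ⟨⟨neg_lt_neg_iff.mp (hζhtop hc).1, fun h => absurd h hN⟩, (hζhtop hc).2⟩
  obtain ⟨k1, k2, k3, k4⟩ := side_aux N M ρ ζ hρ0 hmono hMle fun i hi => (H i hi).1
  obtain ⟨l1, l2, l3, l4⟩ := side_aux Nh Mh ρh ζh hρh0 hmonoh hMhle fun i hi => (Hh i hi).1
  set S : ℝ := q + (∑ ℓ ∈ Finset.Icc 1 N, aa ℓ) + ∑ ℓ ∈ Finset.Icc 1 Nh, ah ℓ with hS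
  have hSpos : 0 < S := by
    have h1 := Finset.sum_nonneg fun i hi => (hpos i hi).le
    have h2 := Finset.sum_nonneg fun i hi => (hposh i hi).le
    linarith
  set B : Polynomial ℂ := Polynomial.C (-(σ : ℂ) ^ 2 / 2) * Polynomial.X ^ 2
    + Polynomial.C (-(A : ℂ)) * Polynomial.X + Polynomial.C (S : ℂ) with hBdef
  have hBc0 : B.coeff 0 = (S : ℂ) := by simp [hBdef]
  have hB : B ≠ 0 := by
    intro h
    rw [h] at hBc0
    simp only [Polynomial.coeff_zero] at hBc0
    exact hSpos.ne (by exact_mod_cast hBc0)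
  have hdeg : (0 < σ ∧ B.natDegree = 2) ∨ (σ = 0 ∧ A ≠ 0 ∧ B.natDegree = 1) ∨
      (σ = 0 ∧ A = 0 ∧ B.natDegree = 0) := by
    rcases hσ.eq_or_lt with h | h
    · right
      have hs : σ = 0 := h.symm
      by_cases hA : A = 0
      · right
        refine ⟨hs, hA, ?_⟩
        simp [hBdef, hs, hA]
      · left
        refine ⟨hs, hA, ?_⟩
        have : B = Polynomial.C (-(A : ℂ)) * Polynomial.X + Polynomial.C (S : ℂ) := by
          simp [hBdef, hs]
        rw [this]
        exact Polynomial.natDegree_linear (by simpa using hA)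
    · left
      refine ⟨h, ?_⟩
      exact Polynomial.natDegree_quadratic (by simpa using h.ne')
  have hMM : M + Mh = N + Nh + B.natDegree := by
    rcases hdeg with ⟨h, hd⟩ | ⟨h, hA, hd⟩ | ⟨h, hA, hd⟩
    · rw [hM, hMh, if_pos (Or.inl h), if_pos (Or.inl h), hd]; omega
    · rw [hM, hMh, hd]
      rcases lt_or_gt_of_ne hA with hA' | hA'
      · simp [h, hA', hA'.not_gt]; omega
      · simp [h, hA', hA'.not_gt]; omega
    · simp [hM, hMh, hd, h, hA]
  have key := pf_main ((Finset.Icc 1 N).disjSum (Finset.Icc 1 Nh))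
    (Sum.elim (fun i => (ρ i : ℂ)) (fun i => -(ρh i : ℂ)))
    (Sum.elim (fun i => -((aa i : ℂ) * ρ i)) (fun i => (ah i : ℂ) * ρh i))
    ((Finset.Icc 1 M).disjSum (Finset.Icc 1 Mh))
    (Sum.elim (fun i => (ζ i : ℂ)) (fun i => -(ζh i : ℂ))) ?_ B hB ?_ f ?_ ?_ ?_
    (if σ = 0 ∧ A = 0 then ((1 / S : ℝ) : ℂ) else 0) ?_ z ?_ ?_
  · have hder : ∀ x, deriv f x = - deriv (psi σ A N Nh aa ρ ah ρh) x := by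
      intro x
      rw [hfdef, deriv_const_sub]
    rw [div_eq_mul_one_div, show (q : ℂ) - psi σ A N Nh aa ρ ah ρh z = f z from rfl, key,
      Finset.sum_disjSum, mul_add, mul_add, Finset.mul_sum, Finset.mul_sum, sub_eq_add_neg,
      sub_eq_add_neg, ← Finset.sum_neg_distrib, ← Finset.sum_neg_distrib, ← add_assoc]
    congr 1
    · congr 1
      apply Finset.sum_congr rfl
      intro i _
      simp only [Sum.elim_inl, hder]
      rw [neg_mul, div_neg, mul_neg, mul_one_div]
    · apply Finset.sum_congr rfl
      intro i _
      simp only [Sum.elim_inr, hder]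
      rw [neg_mul, div_neg, mul_neg, mul_one_div, sub_neg_eq_add]
  · rintro (i | i) hi (j | j) hj hij
    · simp only [Finset.mem_coe, Finset.inl_mem_disjSum] at hi hj
      simp only [Sum.elim_inl] at hij
      rw [k3 i hi j hj (by exact_mod_cast hij)]
    · simp only [Finset.mem_coe, Finset.inl_mem_disjSum, Finset.inr_mem_disjSum] at hi hj
      simp only [Sum.elim_inl, Sum.elim_inr] at hij
      have h : ζ i = -ζh j := by exact_mod_cast hij
      linarith [k2 i hi, l2 j hj]
    · simp only [Finset.mem_coe, Finset.inl_mem_disjSum, Finset.inr_mem_disjSum] at hi hj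
      simp only [Sum.elim_inl, Sum.elim_inr] at hij
      have h : -ζh i = ζ j := by exact_mod_cast hij
      linarith [k2 j hj, l2 i hi]
    · simp only [Finset.mem_coe, Finset.inr_mem_disjSum] at hi hj
      simp only [Sum.elim_inr, neg_inj] at hij
      rw [l3 i hi j hj (by exact_mod_cast hij)]
  · simp only [Finset.card_disjSum, Nat.card_Icc]
    omega
  · intro x hx
    have hx1 : ∀ i ∈ Finset.Icc 1 N, x ≠ (ρ i : ℂ) := fun i hi =>
      hx (Sum.inl i) (Finset.inl_mem_disjSum.mpr hi)
    have hx2 : ∀ i ∈ Finset.Icc 1 Nh, x ≠ -(ρh i : ℂ) := fun i hi =>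
      hx (Sum.inr i) (Finset.inr_mem_disjSum.mpr hi)
    have e1 : x * ∑ ℓ ∈ Finset.Icc 1 N, (aa ℓ : ℂ) / ((ρ ℓ : ℂ) - x) =
        - (∑ ℓ ∈ Finset.Icc 1 N, (aa ℓ : ℂ))
          + ∑ ℓ ∈ Finset.Icc 1 N, -((aa ℓ : ℂ) * ρ ℓ) / (x - ρ ℓ) := by
      rw [Finset.mul_sum, ← Finset.sum_neg_distrib, ← Finset.sum_add_distrib]
      apply Finset.sum_congr rfl
      intro i hi
      have h1 : x - ρ i ≠ 0 := sub_ne_zero.mpr (hx1 i hi)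
      rw [← neg_sub x (ρ i : ℂ)]
      field_simp
      ring
    have e2 : x * ∑ ℓ ∈ Finset.Icc 1 Nh, (ah ℓ : ℂ) / ((ρh ℓ : ℂ) + x) =
        (∑ ℓ ∈ Finset.Icc 1 Nh, (ah ℓ : ℂ))
          - ∑ ℓ ∈ Finset.Icc 1 Nh, ((ah ℓ : ℂ) * ρh ℓ) / (x - -ρh ℓ) := by
      rw [Finset.mul_sum, ← Finset.sum_sub_distrib]
      apply Finset.sum_congr rfl
      intro i hi
      have h1 : x - -(ρh i : ℂ) ≠ 0 := sub_ne_zero.mpr (hx2 i hi)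
      rw [sub_neg_eq_add] at h1 ⊢
      rw [add_comm (ρh i : ℂ) x]
      field_simp
      ring
    rw [hfdef, Finset.sum_disjSum]
    simp only [psi, Sum.elim_inl, Sum.elim_inr, e1, e2, hBdef, hS, Polynomial.eval_add,
      Polynomial.eval_mul, Polynomial.eval_C, Polynomial.eval_pow, Polynomial.eval_X]
    push_cast
    ring
  · rintro (i | i) hi (j | j) hj
    · simp only [Finset.inl_mem_disjSum] at hi hj
      simp only [Sum.elim_inl]
      exact_mod_cast k4 i hi j hj
    · simp only [Finset.inl_mem_disjSum, Finset.inr_mem_disjSum] at hi hj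
      simp only [Sum.elim_inl, Sum.elim_inr]
      intro hij
      have h : ζ i = -ρh j := by exact_mod_cast hij
      linarith [k2 i hi, l1 j hj]
    · simp only [Finset.inl_mem_disjSum, Finset.inr_mem_disjSum] at hi hj
      simp only [Sum.elim_inl, Sum.elim_inr]
      intro hij
      have h : -ζh i = ρ j := by exact_mod_cast hij
      linarith [k1 j hj, l2 i hi]
    · simp only [Finset.inr_mem_disjSum] at hi hj
      simp only [Sum.elim_inr, ne_eq, neg_inj]
      exact_mod_cast l4 i hi j hj
  · rintro (i | i) hi
    · simp only [Finset.inl_mem_disjSum] at hi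
      simp only [hfdef, Sum.elim_inl, (H i hi).2, sub_self]
    · simp only [Finset.inr_mem_disjSum] at hi
      simp only [hfdef, Sum.elim_inr, (Hh i hi).2, sub_self]
  · rcases hdeg with ⟨h, hd⟩ | ⟨h, hA, hd⟩ | ⟨h, hA, hd⟩
    · right
      exact ⟨by omega, if_neg fun h' => h.ne' h'.1⟩
    · right
      exact ⟨by omega, if_neg fun h' => hA h'.2⟩
    · left
      refine ⟨hd, ?_⟩
      rw [if_pos ⟨h, hA⟩, hBc0, ← Complex.ofReal_mul, one_div_mul_cancel hSpos.ne',
        Complex.ofReal_one]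
  · rintro (i | i) hi
    · exact hz1 i (Finset.inl_mem_disjSum.mp hi)
    · exact hz2 i (Finset.inr_mem_disjSum.mp hi)
  · rintro (i | i) hi
    · exact hz3 i (Finset.inl_mem_disjSum.mp hi)
    · exact hz4 i (Finset.inr_mem_disjSum.mp hi)
end

section
/- Assume σ = 0 and a > 0. Then there exist R > 0 and a sequence (b_n)_{n≥−1} of real numbers with b_{−1} = 1/a such that the series ∑_{n=−1}^∞ b_n q^{−n} converges absolutely for every q ∈ ℂ with |q| > R, its sum z(q) satisfies ψ(z(q)) = q for every such q, and z(q) = ζ_{N+1}(q) for every real q > R. Analogously, if σ = 0 and a < 0, then there exist R > 0 and real (b_n)_{n≥−1} with b_{−1} = 1/a such that ∑_{n=−1}^∞ b_n q^{−n} converges absolutely for |q| > R, its sum satisfies ψ = q there, and for real q > R it equals −ζ̂_{N̂+1}(q). -/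
section Helpers
open Filter Topology

lemma aux_inverse (H : ℝ → ℝ) (A : ℝ) (hA : A ≠ 0) (hH : AnalyticAt ℝ H 0) (hH0 : H 0 = A) :
    ∃ m : ℝ → ℝ, AnalyticAt ℝ m 0 ∧ m 0 = 1 / A ∧
      (∀ᶠ u in 𝓝 (0:ℝ), (u / m u) / H (u / m u) = u) ∧
      (∀ᶠ w in 𝓝 (0:ℝ), (w / H w) / m (w / H w) = w) := by
  have hne : H 0 ≠ 0 := by rw [hH0]; exact hA
  set F : ℝ → ℝ := fun w => w / H w with hF
  have hFa : AnalyticAt ℝ F 0 := analyticAt_id.div hH hne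
  have hF0 : F 0 = 0 := by simp [hF]
  have hd : deriv F 0 = 1 / A := by
    have := (hasDerivAt_id (0:ℝ)).div hH.differentiableAt.hasDerivAt hne
    have h2 := this.deriv
    have h3 : deriv F 0 = deriv (id / H) 0 := rfl
    rw [h3, h2, hH0]; simp; field_simp
  have hd' : deriv F 0 ≠ 0 := by rw [hd]; exact one_div_ne_zero hA
  set g := hFa.hasStrictDerivAt.localInverse _ _ _ hd' with hg
  have hga : AnalyticAt ℝ g 0 := by
    have := hFa.analyticAt_localInverse hd'
    rwa [hF0] at this
  have hg0 : g 0 = 0 := by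
    have : g (F 0) = 0 := HasStrictFDerivAt.localInverse_apply_image ..
    rwa [hF0] at this
  have hgd : deriv g 0 = A := by
    have := (hFa.hasStrictDerivAt.to_localInverse hd').hasDerivAt.deriv
    rw [hF0] at this
    change deriv g 0 = _ at this
    rw [this, hd]; simp
  have hl : ∀ᶠ x in 𝓝 0, g (F x) = x := hFa.hasStrictDerivAt.eventually_left_inverse hd'
  have hr : ∀ᶠ x in 𝓝 0, F (g x) = x := by
    have := hFa.hasStrictDerivAt.eventually_right_inverse hd'
    rwa [hF0] at this
  have hk : AnalyticAt ℝ (dslope g 0) 0 := by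
    obtain ⟨p, hp⟩ := hga
    exact hp.has_fpower_series_dslope_fslope.analyticAt
  have hk0 : dslope g 0 0 = A := by rw [dslope_same, hgd]
  have hm : ∀ u, u / (dslope g 0 u)⁻¹ = g u := by
    intro u
    have := sub_smul_dslope g 0 u
    simp only [sub_zero, hg0, smul_eq_mul] at this
    rw [div_inv_eq_mul, this]
  refine ⟨fun u => (dslope g 0 u)⁻¹, hk.inv (by rw [hk0]; exact hA), by simp [hgd], ?_, ?_⟩
  · filter_upwards [hr] with u hu
    rw [hm]; exact hu
  · filter_upwards [hl] with u hu
    rw [hm]; exact hu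

lemma aux_series (m : ℝ → ℝ) (hm : AnalyticAt ℝ m 0) :
    ∃ b : ℕ → ℝ, ∃ r > (0:ℝ), b 0 = m 0 ∧
      (∀ u : ℂ, ‖u‖ < r → Summable (fun n => ‖(b n : ℂ) * u ^ n‖)) ∧
      AnalyticAt ℂ (fun u : ℂ => ∑' n, (b n : ℂ) * u ^ n) 0 ∧
      (∀ᶠ u : ℝ in 𝓝 0, ∑' n, (b n : ℂ) * (u : ℂ) ^ n = (m u : ℂ)) := by
  obtain ⟨p, hp⟩ := hm
  obtain ⟨r, hr0, hr⟩ := ENNReal.lt_iff_exists_nnreal_btwn.1 hp.radius_pos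
  have hr0' : (0:ℝ) < r := by exact_mod_cast hr0
  have hs : Summable (fun n => |p.coeff n| * (r:ℝ) ^ n) := by
    have := p.summable_norm_mul_pow hr
    simpa [FormalMultilinearSeries.norm_apply_eq_norm_coef] using this
  have hsum : ∀ u : ℂ, ‖u‖ < r → Summable (fun n => ‖(p.coeff n : ℂ) * u ^ n‖) := by
    intro u hu
    refine Summable.of_nonneg_of_le (fun n => norm_nonneg _) (fun n => ?_) hs
    rw [norm_mul, norm_pow, Complex.norm_real, Real.norm_eq_abs]
    gcongr
  refine ⟨p.coeff, r, hr0', ?_, hsum, ?_, ?_⟩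
  · have := hp.coeff_zero (fun _ => 0)
    rw [← this, FormalMultilinearSeries.coeff]
    congr 1
    ext i; exact i.elim0
  · refine (HasFPowerSeriesAt.analyticAt (p := FormalMultilinearSeries.ofScalars ℂ (fun n => (p.coeff n : ℂ))) ?_)
    rw [hasFPowerSeriesAt_iff]
    filter_upwards [Metric.ball_mem_nhds (0:ℂ) hr0'] with z hz
    rw [mem_ball_zero_iff] at hz
    have := (hsum z hz).of_norm.hasSum
    simpa [FormalMultilinearSeries.coeff_ofScalars, mul_comm] using this
  · rw [hasFPowerSeriesAt_iff] at hp
    filter_upwards [hp] with u hu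
    have := (Complex.hasSum_ofReal.2 hu).tsum_eq
    rw [zero_add] at this
    rw [← this]
    congr 1; ext n; push_cast [smul_eq_mul]; ring

lemma psi_real (A : ℝ) (N Nh : ℕ) (aa ρ ah ρh : ℕ → ℝ) (x : ℝ) :
    psi 0 A N Nh aa ρ ah ρh (x : ℂ) =
      ((A * x + x * ∑ ℓ ∈ Finset.Icc 1 N, aa ℓ / (ρ ℓ - x)
        - x * ∑ ℓ ∈ Finset.Icc 1 Nh, ah ℓ / (ρh ℓ + x) : ℝ) : ℂ) := by
  unfold psi
  push_cast
  ring

lemma psi_neg (A : ℝ) (N Nh : ℕ) (aa ρ ah ρh : ℕ → ℝ) (z : ℂ) :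
    psi 0 A N Nh aa ρ ah ρh (-z) = psi 0 (-A) Nh N ah ρh aa ρ z := by
  unfold psi
  simp only [sub_neg_eq_add, ← sub_eq_add_neg]
  push_cast
  ring

/-- The function `w ↦ w ψ(1/w)`. -/
noncomputable def auxH (A : ℝ) (N Nh : ℕ) (aa ρ ah ρh : ℕ → ℝ) (w : ℝ) : ℝ :=
  A + ∑ ℓ ∈ Finset.Icc 1 N, aa ℓ * w / (ρ ℓ * w - 1)
    - ∑ ℓ ∈ Finset.Icc 1 Nh, ah ℓ * w / (ρh ℓ * w + 1)

lemma auxH_analytic (A : ℝ) (N Nh : ℕ) (aa ρ ah ρh : ℕ → ℝ) :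
    AnalyticAt ℝ (auxH A N Nh aa ρ ah ρh) 0 := by
  unfold auxH
  refine (analyticAt_const.add ?_).sub ?_
  · refine Finset.analyticAt_fun_sum _ fun l _ => ?_
    exact (analyticAt_const.mul analyticAt_id).div
      ((analyticAt_const.mul analyticAt_id).sub analyticAt_const) (by simp)
  · refine Finset.analyticAt_fun_sum _ fun l _ => ?_
    exact (analyticAt_const.mul analyticAt_id).div
      ((analyticAt_const.mul analyticAt_id).add analyticAt_const) (by simp)

lemma psi_auxH (A : ℝ) (N Nh : ℕ) (aa ρ ah ρh : ℕ → ℝ) (x : ℝ) (hx : x ≠ 0) :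
    psi 0 A N Nh aa ρ ah ρh (x : ℂ) = ((x * auxH A N Nh aa ρ ah ρh (1 / x) : ℝ) : ℂ) := by
  rw [psi_real]
  congr 1
  unfold auxH
  have h1 : ∀ ℓ, aa ℓ * (1 / x) / (ρ ℓ * (1 / x) - 1) = aa ℓ / (ρ ℓ - x) := by
    intro l
    have : ρ l * (1 / x) - 1 = (ρ l - x) / x := by field_simp
    rw [this, mul_one_div, div_div_div_cancel_right₀ hx]
  have h2 : ∀ ℓ, ah ℓ * (1 / x) / (ρh ℓ * (1 / x) + 1) = ah ℓ / (ρh ℓ + x) := by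
    intro l
    have : ρh l * (1 / x) + 1 = (ρh l + x) / x := by field_simp
    rw [this, mul_one_div, div_div_div_cancel_right₀ hx]
  simp only [h1, h2]
  ring

/-- The function `u ↦ u ψ(K/u)` -/
noncomputable def auxP (A : ℝ) (N Nh : ℕ) (aa ρ ah ρh : ℕ → ℝ) (K : ℂ → ℂ) (u : ℂ) : ℂ :=
  A * K u + K u * ∑ ℓ ∈ Finset.Icc 1 N, aa ℓ * u / (ρ ℓ * u - K u)
    - K u * ∑ ℓ ∈ Finset.Icc 1 Nh, ah ℓ * u / (ρh ℓ * u + K u)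

lemma auxP_analytic (A : ℝ) (N Nh : ℕ) (aa ρ ah ρh : ℕ → ℝ) (K : ℂ → ℂ)
    (hK : AnalyticAt ℂ K 0) (hK0 : K 0 ≠ 0) :
    AnalyticAt ℂ (auxP A N Nh aa ρ ah ρh K) 0 := by
  unfold auxP
  refine ((analyticAt_const.mul hK).add (hK.mul ?_)).sub (hK.mul ?_)
  · refine Finset.analyticAt_fun_sum _ fun l _ => ?_
    exact (analyticAt_const.mul analyticAt_id).div
      ((analyticAt_const.mul analyticAt_id).sub hK) (by simpa using hK0)
  · refine Finset.analyticAt_fun_sum _ fun l _ => ?_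
    exact (analyticAt_const.mul analyticAt_id).div
      ((analyticAt_const.mul analyticAt_id).add hK) (by simpa using hK0)

lemma psi_auxP (A : ℝ) (N Nh : ℕ) (aa ρ ah ρh : ℕ → ℝ) (K : ℂ → ℂ) (u : ℂ) (hu : u ≠ 0) :
    psi 0 A N Nh aa ρ ah ρh (K u / u) = auxP A N Nh aa ρ ah ρh K u / u := by
  unfold psi auxP
  have h1 : ∀ ℓ, (aa ℓ : ℂ) * u / (ρ ℓ * u - K u) = aa ℓ / (ρ ℓ - K u / u) := by
    intro l
    have : (ρ l : ℂ) - K u / u = (ρ l * u - K u) / u := by field_simp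
    rw [this, div_div_eq_mul_div]
  have h2 : ∀ ℓ, (ah ℓ : ℂ) * u / (ρh ℓ * u + K u) = ah ℓ / (ρh ℓ + K u / u) := by
    intro l
    have : (ρh l : ℂ) + K u / u = (ρh l * u + K u) / u := by field_simp
    rw [this, div_div_eq_mul_div]
  simp only [h1, h2]
  push_cast
  ring

lemma zeta_bound (A : ℝ) (N Nh : ℕ) (aa ρ ah ρh : ℕ → ℝ)
    (hpos : ∀ ℓ ∈ Finset.Icc 1 N, 0 < aa ℓ)
    (hposh : ∀ ℓ ∈ Finset.Icc 1 Nh, 0 < ah ℓ)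
    (hρ0 : ρ 0 = 0) (hρh0 : ρh 0 = 0)
    (hmono : ∀ i j, i < j → j ≤ N → ρ i < ρ j)
    (hmonoh : ∀ i j, i < j → j ≤ Nh → ρh i < ρh j)
    (x q : ℝ) (hx : ρ N < x) (h : psi 0 A N Nh aa ρ ah ρh (x : ℂ) = (q : ℂ)) :
    0 < x ∧ q ≤ A * x := by
  have hle : ∀ l, l ≤ N → ρ l ≤ ρ N := by
    intro l hl
    rcases hl.eq_or_lt with h | h
    · rw [h]
    · exact (hmono l N h le_rfl).le
  have hx0 : 0 < x := by
    have := hle 0 (Nat.zero_le _)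
    linarith
  refine ⟨hx0, ?_⟩
  rw [psi_real] at h
  have h := Complex.ofReal_injective h
  have h1 : ∑ ℓ ∈ Finset.Icc 1 N, aa ℓ / (ρ ℓ - x) ≤ 0 := by
    refine Finset.sum_nonpos fun l hl => ?_
    have := hle l (Finset.mem_Icc.1 hl).2
    exact div_nonpos_of_nonneg_of_nonpos (hpos l hl).le (by linarith)
  have h2 : 0 ≤ ∑ ℓ ∈ Finset.Icc 1 Nh, ah ℓ / (ρh ℓ + x) := by
    refine Finset.sum_nonneg fun l hl => ?_
    have := hmonoh 0 l (Finset.mem_Icc.1 hl).1 (Finset.mem_Icc.1 hl).2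
    exact div_nonneg (hposh l hl).le (by linarith)
  nlinarith [mul_nonneg hx0.le (neg_nonneg.2 h1), mul_nonneg hx0.le h2]

lemma term_eq (b : ℕ → ℝ) (q : ℂ) (hq : q ≠ 0) (n : ℕ) :
    (b n : ℂ) * q ^ (1 - (n : ℤ)) = q * ((b n : ℂ) * (1 / q) ^ n) := by
  rw [zpow_sub₀ hq, zpow_one, zpow_natCast, one_div, inv_pow]
  ring

lemma core (A : ℝ) (N Nh : ℕ) (aa ρ ah ρh : ℕ → ℝ) (hA : 0 < A)
    (hpos : ∀ ℓ ∈ Finset.Icc 1 N, 0 < aa ℓ)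
    (hposh : ∀ ℓ ∈ Finset.Icc 1 Nh, 0 < ah ℓ)
    (hρ0 : ρ 0 = 0) (hρh0 : ρh 0 = 0)
    (hmono : ∀ i j, i < j → j ≤ N → ρ i < ρ j)
    (hmonoh : ∀ i j, i < j → j ≤ Nh → ρh i < ρh j)
    (ζ : ℝ → ℝ)
    (hζ : ∀ q : ℝ, 0 < q → ρ N < ζ q ∧ psi 0 A N Nh aa ρ ah ρh (ζ q : ℂ) = (q : ℂ)) :
    ∃ R > (0 : ℝ), ∃ b : ℕ → ℝ, b 0 = 1 / A ∧
        (∀ q : ℂ, R < ‖q‖ →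
          Summable (fun n : ℕ => ‖(b n : ℂ) * q ^ (1 - (n : ℤ))‖) ∧
          psi 0 A N Nh aa ρ ah ρh (∑' n : ℕ, (b n : ℂ) * q ^ (1 - (n : ℤ))) = q) ∧
        (∀ q : ℝ, R < q →
          (∑' n : ℕ, (b n : ℂ) * (q : ℂ) ^ (1 - (n : ℤ))) = (ζ q : ℂ)) := by
  set H := auxH A N Nh aa ρ ah ρh with hH
  obtain ⟨m, hma, hm0, hm1, hm2⟩ := aux_inverse H A hA.ne' (auxH_analytic ..)
    (by simp [hH, auxH])
  obtain ⟨b, r, hr, hb0, hsum, hKa, hKm⟩ := aux_series m hma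
  set K : ℂ → ℂ := fun u : ℂ => ∑' n, (b n : ℂ) * u ^ n with hK
  have hm0' : m 0 ≠ 0 := by rw [hm0]; exact one_div_ne_zero hA.ne'
  have hK0 : K 0 ≠ 0 := by
    have := hKm.self_of_nhds
    have h2 : K 0 = (m 0 : ℂ) := by simpa [hK] using this
    rw [h2]; exact_mod_cast hm0'
  have hPreal : ∀ᶠ u : ℝ in 𝓝[≠] 0, auxP A N Nh aa ρ ah ρh K (u : ℂ) = 1 := by
    have e1 : ∀ᶠ u : ℝ in 𝓝 0, m u ≠ 0 := hma.continuousAt.eventually_ne hm0'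
    filter_upwards [hm1.filter_mono nhdsWithin_le_nhds, hKm.filter_mono nhdsWithin_le_nhds,
      e1.filter_mono nhdsWithin_le_nhds, self_mem_nhdsWithin] with u h1 h2 h3 h4
    have hu : u ≠ 0 := h4
    have huc : (u : ℂ) ≠ 0 := by exact_mod_cast hu
    have hKu : K u = (m u : ℂ) := h2
    have hp := psi_auxP A N Nh aa ρ ah ρh K u huc
    have hx : m u / u ≠ 0 := div_ne_zero h3 hu
    have hp2 := psi_auxH A N Nh aa ρ ah ρh (m u / u) hx
    rw [hKu, ← Complex.ofReal_div, hp2, one_div_div, ← hH] at hp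
    have hHne : H (u / m u) ≠ 0 := by
      intro h0; rw [h0, div_zero] at h1; exact hu h1.symm
    have : m u / u * H (u / m u) * u = 1 := by
      have h5 : u / m u = u * H (u / m u) := by
        rwa [div_eq_iff hHne] at h1
      have h6 : H (u / m u) = 1 / m u := by
        have : u * (H (u / m u)) = u * (1 / m u) := by rw [← h5]; ring
        exact mul_left_cancel₀ hu this
      rw [h6]; field_simp
    rw [eq_div_iff huc] at hp
    rw [← hp]
    exact_mod_cast this
  have hPev : ∀ᶠ u : ℂ in 𝓝 0, auxP A N Nh aa ρ ah ρh K u = 1 := by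
    refine ((auxP_analytic A N Nh aa ρ ah ρh K hKa hK0).frequently_eq_iff_eventually_eq
      (analyticAt_const (v := (1:ℂ)))).1 ?_
    have ht : Tendsto (fun u : ℝ => (u : ℂ)) (𝓝[≠] 0) (𝓝[≠] 0) := by
      refine tendsto_nhdsWithin_of_tendsto_nhds_of_eventually_within _ ?_ ?_
      · have := Complex.continuous_ofReal.tendsto 0
        rw [Complex.ofReal_zero] at this
        exact this.mono_left nhdsWithin_le_nhds
      · filter_upwards [self_mem_nhdsWithin] with u hu
        have hu : u ≠ 0 := hu
        simpa using hu
    exact ht.frequently hPreal.frequently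
  obtain ⟨δ, hδ, hPδ⟩ := Metric.eventually_nhds_iff_ball.1 hPev
  have hfin : ∀ᶠ q : ℝ in atTop, (q : ℂ) * K (1 / q) = (ζ q : ℂ) := by
    have hinv : Tendsto (fun q : ℝ => 1 / q) atTop (𝓝 0) := by
      simpa using tendsto_inv_atTop_zero (𝕜 := ℝ)
    have hζt : Tendsto ζ atTop atTop := by
      refine tendsto_atTop_mono' _ ?_ (tendsto_id.atTop_div_const hA)
      filter_upwards [eventually_gt_atTop 0] with q hq
      have := (zeta_bound A N Nh aa ρ ah ρh hpos hposh hρ0 hρh0 hmono hmonoh _ q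
        (hζ q hq).1 (hζ q hq).2).2
      simp only [id]
      rw [div_le_iff₀ hA]; linarith
    have hinvζ : Tendsto (fun q : ℝ => 1 / ζ q) atTop (𝓝 0) := hinv.comp hζt
    filter_upwards [eventually_gt_atTop 0, hinv.eventually hKm, hinvζ.eventually hm2]
      with q hq h1 h2
    have hb := (zeta_bound A N Nh aa ρ ah ρh hpos hposh hρ0 hρh0 hmono hmonoh _ q
        (hζ q hq).1 (hζ q hq).2).1
    have h3 := (hζ q hq).2
    rw [psi_auxH A N Nh aa ρ ah ρh _ hb.ne', ← hH] at h3
    have h3 : ζ q * H (1 / ζ q) = q := Complex.ofReal_injective h3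
    have h4 : 1 / ζ q / H (1 / ζ q) = 1 / q := by rw [div_div, h3]
    rw [h4] at h2
    have h5 : K (1 / q) = (m (1 / q) : ℂ) := by
      rw [← h1]; push_cast; rfl
    rw [h5]
    have h6 : q * m (1 / q) = ζ q := by
      rw [div_div] at h2
      have h7 := congrArg (fun t => 1 / t) h2
      simp only [one_div_one_div] at h7
      exact h7
    exact_mod_cast h6
  obtain ⟨R0, hR0⟩ := eventually_atTop.1 hfin
  have key : ∀ q : ℂ, q ≠ 0 → ∑' n : ℕ, (b n : ℂ) * q ^ (1 - (n : ℤ)) = q * K (1 / q) := by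
    intro q hq
    simp only [term_eq b q hq, hK]
    rw [tsum_mul_left]
  refine ⟨max (max (1 / δ) (1 / r)) R0, lt_max_of_lt_left (lt_max_of_lt_left (by positivity)),
    b, hb0.trans hm0, ?_, ?_⟩
  · intro q hq
    have hq1 : 1 / δ < ‖q‖ := lt_of_le_of_lt ((le_max_left _ _).trans (le_max_left _ _)) hq
    have hq2 : 1 / r < ‖q‖ := lt_of_le_of_lt ((le_max_right _ _).trans (le_max_left _ _)) hq
    have hqn : 0 < ‖q‖ := lt_trans (by positivity) hq1
    have hq0 : q ≠ 0 := norm_pos_iff.1 hqn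
    have hn : ‖1 / q‖ = 1 / ‖q‖ := by simp
    constructor
    · have := (hsum (1 / q) (by rw [hn]; exact (one_div_lt hr hqn).1 hq2)).mul_left ‖q‖
      simpa only [term_eq b q hq0, norm_mul q] using this
    · rw [key q hq0]
      have h1 := psi_auxP A N Nh aa ρ ah ρh K (1 / q) (one_div_ne_zero hq0)
      rw [hPδ (1 / q) (by rw [mem_ball_zero_iff, hn]; exact (one_div_lt hδ hqn).1 hq1),
        one_div_one_div, div_div_eq_mul_div, div_one] at h1
      rw [mul_comm]; exact h1
  · intro q hq
    have hq1 : 1 / δ < q := lt_of_le_of_lt ((le_max_left _ _).trans (le_max_left _ _)) hq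
    have hq0 : 0 < q := lt_trans (by positivity) hq1
    rw [key q (by exact_mod_cast hq0.ne')]
    exact hR0 q ((le_max_right _ _).trans hq.le)

end Helpers

/-- For `σ = 0`, `a ≠ 0`, the extra solution of `ψ = q` (namely `ζ_{N+1}` when `a > 0`,
`-ζ̂_{N̂+1}` when `a < 0`) admits a convergent expansion in powers of `q^{-1}` with leading
coefficient `b_{-1} = 1/a`.  Here `b n` denotes the paper's `b_{n-1}`, so the series is
`∑_{n≥0} b n · q^{1-n}`. -/
theorem extra_root_series_sigma_zero
    (σ A : ℝ) (N Nh : ℕ) (aa ρ ah ρh : ℕ → ℝ)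
    (hσ : σ = 0)
    (hpos : ∀ ℓ ∈ Finset.Icc 1 N, 0 < aa ℓ)
    (hposh : ∀ ℓ ∈ Finset.Icc 1 Nh, 0 < ah ℓ)
    (hρ0 : ρ 0 = 0) (hρh0 : ρh 0 = 0)
    (hmono : ∀ i j, i < j → j ≤ N → ρ i < ρ j)
    (hmonoh : ∀ i j, i < j → j ≤ Nh → ρh i < ρh j)
    (ζM ζhM : ℝ → ℝ)
    (hζM : 0 < A → ∀ q : ℝ, 0 < q → ρ N < ζM q ∧
        psi σ A N Nh aa ρ ah ρh (ζM q : ℂ) = (q : ℂ))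
    (hζhM : A < 0 → ∀ q : ℝ, 0 < q → ρh Nh < ζhM q ∧
        psi σ A N Nh aa ρ ah ρh (-(ζhM q : ℝ) : ℂ) = (q : ℂ)) :
    (0 < A →
      ∃ R > (0 : ℝ), ∃ b : ℕ → ℝ, b 0 = 1 / A ∧
        (∀ q : ℂ, R < ‖q‖ →
          Summable (fun n : ℕ => ‖(b n : ℂ) * q ^ (1 - (n : ℤ))‖) ∧
          psi σ A N Nh aa ρ ah ρh (∑' n : ℕ, (b n : ℂ) * q ^ (1 - (n : ℤ))) = q) ∧
        (∀ q : ℝ, R < q →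
          (∑' n : ℕ, (b n : ℂ) * (q : ℂ) ^ (1 - (n : ℤ))) = (ζM q : ℂ))) ∧
    (A < 0 →
      ∃ R > (0 : ℝ), ∃ b : ℕ → ℝ, b 0 = 1 / A ∧
        (∀ q : ℂ, R < ‖q‖ →
          Summable (fun n : ℕ => ‖(b n : ℂ) * q ^ (1 - (n : ℤ))‖) ∧
          psi σ A N Nh aa ρ ah ρh (∑' n : ℕ, (b n : ℂ) * q ^ (1 - (n : ℤ))) = q) ∧
        (∀ q : ℝ, R < q →
          (∑' n : ℕ, (b n : ℂ) * (q : ℂ) ^ (1 - (n : ℤ))) = (-(ζhM q : ℝ) : ℂ))) := by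
  subst hσ
  constructor
  · intro hA
    exact core A N Nh aa ρ ah ρh hA hpos hposh hρ0 hρh0 hmono hmonoh ζM (hζM hA)
  · intro hA
    obtain ⟨R, hR, b, hb0, h1, h2⟩ := core (-A) Nh N ah ρh aa ρ (by linarith) hposh hpos hρh0 hρ0
      hmonoh hmono ζhM (fun q hq => ⟨(hζhM hA q hq).1, by
        rw [← psi_neg]; exact (hζhM hA q hq).2⟩)
    have hs : ∀ q : ℂ, ∑' n : ℕ, (((fun n => - b n) n : ℝ) : ℂ) * q ^ (1 - (n : ℤ)) =
        - ∑' n : ℕ, (b n : ℂ) * q ^ (1 - (n : ℤ)) := by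
      intro q
      rw [← tsum_neg]
      congr 1; ext n; push_cast; ring
    refine ⟨R, hR, fun n => - b n, by simp [hb0, div_neg], fun q hq => ⟨?_, ?_⟩, fun q hq => ?_⟩
    · simpa using (h1 q hq).1
    · rw [hs, psi_neg]; exact (h1 q hq).2
    · rw [hs, h2 q hq]
end

section
/- Let f : [0,∞) → ℂ be continuous, let k ∈ {1, 2}, let j ≥ 0 be an integer, let R ≥ 0, and let (a_n)_{n≥k+j} be complex numbers such that the series ∑_{n=k+j}^∞ a_n z^{−n/k} converges for every z ∈ ℂ with |z| > R (principal branch of the square root when k = 2), and such that for every z ∈ ℂ with Re z > R the Laplace transform ∫_0^∞ e^{−zt} f(t) dt exists and equals ∑_{n=k+j}^∞ a_n z^{−n/k}. Then for every t ≥ 0, f(t) = ∑_{n=j}^∞ a_{n+k} · t^{n/k}/Γ(n/k + 1), and this series converges for every t ∈ ℂ. -/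
open MeasureTheory Set Filter Topology

lemma lap_meas {h : ℝ → ℂ} (hc : ContinuousOn h (Ici 0)) (z : ℂ) :
    AEStronglyMeasurable (fun t : ℝ => Complex.exp (-z * t) * h t) (volume.restrict (Ioi 0)) := by
  refine ContinuousOn.aestronglyMeasurable ?_ measurableSet_Ioi
  exact ContinuousOn.mul (by fun_prop) (hc.mono Ioi_subset_Ici_self)

lemma lap_norm (h : ℝ → ℂ) (z : ℂ) (t : ℝ) :
    ‖Complex.exp (-z * t) * h t‖ = Real.exp (-z.re * t) * ‖h t‖ := by
  rw [norm_mul, Complex.norm_exp]; simp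

lemma lap_int {h : ℝ → ℂ} (hc : ContinuousOn h (Ici 0)) {r : ℝ}
    (hint : ∀ x : ℝ, r < x →
      IntegrableOn (fun t : ℝ => Complex.exp (-(x : ℂ) * t) * h t) (Ioi 0))
    (z : ℂ) (hz : r < z.re) :
    IntegrableOn (fun t : ℝ => Complex.exp (-z * t) * h t) (Ioi 0) := by
  refine Integrable.mono (hint z.re hz) (lap_meas hc z) (Eventually.of_forall fun t => ?_)
  rw [lap_norm, lap_norm]; simp

lemma lap_diff {h : ℝ → ℂ} (hc : ContinuousOn h (Ici 0)) {r : ℝ}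
    (hint : ∀ x : ℝ, r < x →
      IntegrableOn (fun t : ℝ => Complex.exp (-(x : ℂ) * t) * h t) (Ioi 0))
    (z : ℂ) (hz : r < z.re) :
    DifferentiableAt ℂ (fun z : ℂ => ∫ t in Ioi (0 : ℝ), Complex.exp (-z * t) * h t) z := by
  obtain ⟨δ, hδ, hδ'⟩ : ∃ δ : ℝ, 0 < δ ∧ r < z.re - 2 * δ :=
    ⟨(z.re - r) / 3, by linarith, by linarith⟩
  have key := hasDerivAt_integral_of_dominated_loc_of_deriv_le (𝕜 := ℂ)
    (μ := volume.restrict (Ioi (0 : ℝ)))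
    (F := fun z t => Complex.exp (-z * t) * h t) (x₀ := z) (s := Metric.ball z δ)
    (F' := fun z t => (-(t : ℂ)) * (Complex.exp (-z * t) * h t))
    (bound := fun t => δ⁻¹ * ‖Complex.exp (-((z.re - 2 * δ : ℝ) : ℂ) * t) * h t‖)
    (Metric.ball_mem_nhds z hδ) (Eventually.of_forall fun w => lap_meas hc w)
    (lap_int hc hint z hz)
    (AEStronglyMeasurable.mul (by fun_prop) (lap_meas hc z)) ?_
    ((hint _ hδ').norm.const_mul _) ?_
  · exact key.2.differentiableAt
  · refine (ae_restrict_iff' measurableSet_Ioi).2 (Eventually.of_forall fun t ht w hw => ?_)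
    have ht : 0 < t := ht
    rw [norm_mul, lap_norm, lap_norm, ← mul_assoc, ← mul_assoc]
    refine mul_le_mul_of_nonneg_right ?_ (norm_nonneg _)
    have h1 : z.re - δ ≤ w.re := by
      have := Complex.abs_re_le_norm (w - z)
      rw [Metric.mem_ball, dist_eq_norm] at hw
      have := abs_le.1 (this.trans hw.le)
      simp at this; linarith [this.1]
    have h2 : t ≤ δ⁻¹ * Real.exp (δ * t) := by
      rw [← div_eq_inv_mul, le_div_iff₀ hδ]
      linarith [Real.add_one_le_exp (δ * t)]
    simp only [norm_neg, Complex.norm_real, Real.norm_eq_abs, abs_of_pos ht, Complex.ofReal_re]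
    calc t * Real.exp (-w.re * t) ≤ (δ⁻¹ * Real.exp (δ * t)) * Real.exp (-(z.re - δ) * t) := by
          gcongr
      _ = _ := by rw [mul_assoc, ← Real.exp_add]; ring_nf
  · refine Eventually.of_forall fun t w _ => ?_
    have : HasDerivAt (fun w : ℂ => -w * t) (-(t : ℂ)) w := by
      simpa using ((hasDerivAt_id w).neg.mul_const (t : ℂ))
    have h3 := this.cexp.mul_const (h t)
    rw [show Complex.exp (-w * t) * -(t : ℂ) * h t = (-(t : ℂ)) * (Complex.exp (-w * t) * h t) by
      ring] at h3
    exact h3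

lemma lap_unique {h : ℝ → ℂ} (hc : ContinuousOn h (Ici 0)) {r : ℝ}
    (hint : ∀ x : ℝ, r < x →
      IntegrableOn (fun t : ℝ => Complex.exp (-(x : ℂ) * t) * h t) (Ioi 0))
    (h0 : ∀ x : ℝ, r < x → ∫ t in Ioi (0 : ℝ), Complex.exp (-(x : ℂ) * t) * h t = 0) :
    ∀ t, 0 ≤ t → h t = 0 := by
  set H : ℂ → ℂ := fun z : ℂ => ∫ t in Ioi (0 : ℝ), Complex.exp (-z * t) * h t with hH
  have hopen : IsOpen {z : ℂ | r < z.re} := isOpen_lt continuous_const Complex.continuous_re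
  have han : AnalyticOnNhd ℂ H {z : ℂ | r < z.re} :=
    DifferentiableOn.analyticOnNhd
      (fun z hz => (lap_diff hc hint z hz).differentiableWithinAt) hopen
  have hpre : IsPreconnected {z : ℂ | r < z.re} := (convex_halfSpace_re_gt r).isPreconnected
  have hz : EqOn H 0 {z : ℂ | r < z.re} := by
    have hmem : ((r + 1 : ℝ) : ℂ) ∈ {z : ℂ | r < z.re} := by
      show r < ((r + 1 : ℝ) : ℂ).re
      rw [Complex.ofReal_re]; linarith
    refine han.eqOn_zero_of_preconnected_of_frequently_eq_zero hpre hmem ?_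
    have ht : Tendsto (fun x : ℝ => (x : ℂ)) (𝓝[>] (r + 1)) (𝓝[≠] ((r + 1 : ℝ) : ℂ)) := by
      refine tendsto_nhdsWithin_iff.2 ⟨(Complex.continuous_ofReal.tendsto _).mono_left
        nhdsWithin_le_nhds, ?_⟩
      filter_upwards [self_mem_nhdsWithin] with x hx
      exact fun hh => (ne_of_gt hx : x ≠ r + 1) (Complex.ofReal_injective hh)
    refine ht.frequently (Eventually.frequently ?_)
    filter_upwards [self_mem_nhdsWithin] with x hx
    exact h0 x (by have : r + 1 < x := hx; linarith)
  have hpos : ∀ t, 0 < t → h t = 0 := by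
    intro t ht
    set F : ℝ → ℂ := (Ioi (0 : ℝ)).indicator
      (fun t => Complex.exp (-((r + 1 : ℝ) : ℂ) * t) * h t) with hF
    have hFi : Integrable F := (integrable_indicator_iff measurableSet_Ioi).2
      (hint _ (by linarith))
    have hFF : FourierTransform.fourier F = (0 : ℝ → ℂ) := by
      ext w
      rw [Real.fourier_real_eq_integral_exp_smul]
      have hw := hz (x := ((r + 1 : ℝ) : ℂ) + 2 * Real.pi * w * Complex.I)
        (by simp)
      rw [hH] at hw
      simp only [Pi.zero_apply] at hw ⊢
      rw [← hw, ← integral_indicator measurableSet_Ioi]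
      congr 1 with v
      by_cases hv : v ∈ Ioi (0 : ℝ)
      · rw [hF, indicator_of_mem hv, indicator_of_mem hv, smul_eq_mul, ← mul_assoc,
          ← Complex.exp_add]
        congr 2
        push_cast; ring
      · rw [hF, indicator_of_notMem hv, indicator_of_notMem hv, smul_zero]
    have hev : F =ᶠ[𝓝 t] (fun t => Complex.exp (-((r + 1 : ℝ) : ℂ) * t) * h t) := by
      filter_upwards [Ioi_mem_nhds ht] with v hv
      rw [hF, indicator_of_mem hv]
    have hFc : ContinuousAt F t := by
      refine ContinuousAt.congr ?_ hev.symm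
      exact ContinuousAt.mul (by fun_prop) (hc.continuousAt (Ici_mem_nhds ht))
    have hinv := hFi.fourierInv_fourier_eq (by rw [hFF]; exact integrable_zero _ _ _) hFc
    rw [hFF, hev.eq_of_nhds, Real.fourierInv_eq] at hinv
    simp at hinv
    exact hinv
  intro t ht
  rcases ht.eq_or_lt with rfl | ht
  · have h1 : Tendsto h (𝓝[>] 0) (𝓝 (h 0)) :=
      (hc 0 self_mem_Ici).mono_left (nhdsWithin_mono _ Ioi_subset_Ici_self)
    have h2 : Tendsto h (𝓝[>] 0) (𝓝 0) := by
      refine tendsto_const_nhds.congr' ?_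
      filter_upwards [self_mem_nhdsWithin] with x hx
      exact (hpos x hx).symm
    exact tendsto_nhds_unique h1 h2
  · exact hpos t ht

lemma rpow_int {s r : ℝ} (hs : 0 ≤ s) (hr : 0 < r) :
    IntegrableOn (fun u : ℝ => u ^ s * Real.exp (-(r * u))) (Ioi 0) := by
  have := integrableOn_rpow_mul_exp_neg_mul_rpow (p := 1) (s := s) (b := r) (by linarith)
    one_pos hr
  simpa using this

lemma gamma_bound {s r t : ℝ} (hs : 0 ≤ s) (hr : 0 < r) (ht : 0 ≤ t) :
    t ^ s / Real.Gamma (s + 1) ≤ Real.exp (r * t) * r ^ (-s) := by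
  have hG : 0 < Real.Gamma (s + 1) := Real.Gamma_pos_of_pos (by linarith)
  have h1 := Real.integral_rpow_mul_exp_neg_mul_Ioi (a := s + 1) (r := r) (by linarith) hr
  simp only [add_sub_cancel_right] at h1
  have h2 : ∫ u in Ioi t, u ^ s * Real.exp (-(r * u)) ≤
      ∫ u in Ioi 0, u ^ s * Real.exp (-(r * u)) := by
    refine setIntegral_mono_set (rpow_int hs hr) ?_ (Ioi_subset_Ioi ht).eventuallyLE
    refine (ae_restrict_iff' measurableSet_Ioi).2 (Eventually.of_forall fun u hu => ?_)
    have hu : 0 < u := hu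
    show 0 ≤ u ^ s * Real.exp (-(r * u))
    positivity
  have h3 : ∫ u in Ioi t, t ^ s * Real.exp (-r * u) ≤
      ∫ u in Ioi t, u ^ s * Real.exp (-(r * u)) := by
    refine setIntegral_mono_on ((integrableOn_exp_mul_Ioi (by linarith) t).const_mul _)
      ((rpow_int hs hr).mono_set (Ioi_subset_Ioi ht)) measurableSet_Ioi fun u hu => ?_
    have hu : t < u := hu
    rw [neg_mul]
    gcongr
  rw [integral_const_mul, integral_exp_mul_Ioi (by linarith)] at h3
  have h4 := h3.trans (h2.trans_eq h1)
  rw [neg_div_neg_eq, one_div, Real.inv_rpow hr.le, Real.rpow_add hr, Real.rpow_one] at h4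
  rw [div_le_iff₀ hG, Real.rpow_neg hr.le]
  have hrs : 0 < r ^ s := Real.rpow_pos_of_pos hr s
  have h5 : t ^ s * Real.exp (-r * t) ≤ (r ^ s)⁻¹ * Real.Gamma (s + 1) := by
    have := mul_le_mul_of_nonneg_right h4 hr.le
    field_simp at this ⊢
    linarith
  have h6 := mul_le_mul_of_nonneg_left h5 (Real.exp_pos (r * t)).le
  have h7 : Real.exp (r * t) * (t ^ s * Real.exp (-r * t)) = t ^ s := by
    rw [mul_left_comm, ← Real.exp_add]; simp
  rw [h7] at h6
  linarith

lemma core_s18 (f : ℝ → ℂ) (hf : ContinuousOn f (Ici 0)) (s : ℕ → ℝ) (hs : ∀ m, 0 ≤ s m)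
    (b : ℕ → ℂ) (r : ℝ) (hr : 0 < r)
    (hconv : ∀ x : ℝ, r ≤ x → Summable fun m => ‖b m‖ * x ^ (-(s m + 1)))
    (hint : ∀ x : ℝ, r < x →
      IntegrableOn (fun t : ℝ => Complex.exp (-(x : ℂ) * t) * f t) (Ioi 0))
    (hlap : ∀ x : ℝ, r < x → (∫ t in Ioi (0 : ℝ), Complex.exp (-(x : ℂ) * t) * f t)
      = ∑' m, b m * ((x ^ (-(s m + 1)) : ℝ) : ℂ)) :
    (∀ t : ℝ, 0 ≤ t → f t = ∑' m, b m * ((t ^ s m : ℝ) : ℂ) / (Real.Gamma (s m + 1) : ℂ)) ∧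
    (∀ t : ℝ, 0 ≤ t → Summable fun m => ‖b m‖ * (t ^ s m / Real.Gamma (s m + 1))) := by
  have hG : ∀ m, 0 < Real.Gamma (s m + 1) := fun m =>
    Real.Gamma_pos_of_pos (by linarith [hs m])
  have hsum0 : Summable fun m => ‖b m‖ * r ^ (-s m) := by
    refine ((hconv r le_rfl).mul_right r).congr fun m => ?_
    rw [mul_assoc, ← Real.rpow_add_one hr.ne']; ring_nf
  have hbd : ∀ m t, 0 ≤ t → ‖b m‖ * (t ^ s m / Real.Gamma (s m + 1)) ≤
      (‖b m‖ * r ^ (-s m)) * Real.exp (r * t) := by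
    intro m t ht
    have := mul_le_mul_of_nonneg_left (gamma_bound (hs m) hr ht) (norm_nonneg (b m))
    linarith
  have hnn : ∀ m t, 0 ≤ t → 0 ≤ ‖b m‖ * (t ^ s m / Real.Gamma (s m + 1)) := by
    intro m t ht
    have := hG m
    positivity
  have hsm : ∀ t : ℝ, 0 ≤ t → Summable fun m => ‖b m‖ * (t ^ s m / Real.Gamma (s m + 1)) :=
    fun t ht => Summable.of_nonneg_of_le (fun m => hnn m t ht) (fun m => hbd m t ht)
      (hsum0.mul_right _)
  refine ⟨?_, hsm⟩
  set G : ℕ → ℝ → ℂ := fun m t => b m * ((t ^ s m : ℝ) : ℂ) / (Real.Gamma (s m + 1) : ℂ) with hGdef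
  have hGn : ∀ m t, 0 ≤ t → ‖G m t‖ = ‖b m‖ * (t ^ s m / Real.Gamma (s m + 1)) := by
    intro m t ht
    rw [hGdef]
    simp only [norm_div, norm_mul, Complex.norm_real, Real.norm_eq_abs]
    rw [abs_of_pos (hG m), abs_of_nonneg (Real.rpow_nonneg ht _), mul_div_assoc]
  have hGcont : ∀ m, Continuous (G m) := by
    intro m
    have : Continuous fun t : ℝ => t ^ s m := Real.continuous_rpow_const (hs m)
    exact (continuous_const.mul (Complex.continuous_ofReal.comp this)).div_const _
  have hgc : ContinuousOn (fun t => ∑' m, G m t) (Ici 0) := by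
    intro t ht
    have h1 : ContinuousOn (fun t => ∑' m, G m t) (Icc 0 (t + 1)) := by
      refine continuousOn_tsum (fun m => (hGcont m).continuousOn)
        (hsum0.mul_right (Real.exp (r * (t + 1)))) fun m u hu => ?_
      rw [hGn m u hu.1]
      refine (hbd m u hu.1).trans ?_
      have := hu.2
      gcongr
    have ht : 0 ≤ t := ht
    refine (h1 t ⟨ht, by linarith⟩).mono_of_mem_nhdsWithin ?_
    rw [← Ici_inter_Iic]
    exact inter_mem_nhdsWithin _ (Iic_mem_nhds (by linarith))
  -- termwise Laplace transforms
  have hTn : ∀ x : ℝ, ∀ m, ∀ t ∈ Ioi (0 : ℝ), ‖Complex.exp (-(x : ℂ) * t) * G m t‖ =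
      (‖b m‖ / Real.Gamma (s m + 1)) * (t ^ s m * Real.exp (-(x * t))) := by
    intro x m t ht
    rw [lap_norm, hGn m t (le_of_lt ht), Complex.ofReal_re, neg_mul]; ring
  have hTe : ∀ x : ℝ, ∀ m, ∀ t : ℝ, Complex.exp (-(x : ℂ) * t) * G m t =
      (b m / (Real.Gamma (s m + 1) : ℂ)) * ((t ^ s m * Real.exp (-(x * t)) : ℝ) : ℂ) := by
    intro x m t
    rw [hGdef]; push_cast; rw [neg_mul]; ring
  have hval : ∀ x : ℝ, 0 < x → ∀ m, ∫ t in Ioi (0 : ℝ), t ^ s m * Real.exp (-(x * t)) =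
      x ^ (-(s m + 1)) * Real.Gamma (s m + 1) := by
    intro x hx m
    have h1 := Real.integral_rpow_mul_exp_neg_mul_Ioi (a := s m + 1) (r := x)
      (by linarith [hs m]) hx
    simp only [add_sub_cancel_right] at h1
    rw [h1, one_div, Real.inv_rpow hx.le, Real.rpow_neg hx.le]
  have hTi : ∀ x : ℝ, 0 < x → ∀ m,
      IntegrableOn (fun t : ℝ => Complex.exp (-(x : ℂ) * t) * G m t) (Ioi 0) := by
    intro x hx m
    simp_rw [hTe]
    exact ((rpow_int (hs m) hx).ofReal).const_mul _
  have hTs : ∀ x : ℝ, r < x → HasSum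
      (fun m => ∫ t in Ioi (0 : ℝ), Complex.exp (-(x : ℂ) * t) * G m t)
      (∫ t in Ioi (0 : ℝ), ∑' m, Complex.exp (-(x : ℂ) * t) * G m t) := by
    intro x hx
    refine hasSum_integral_of_summable_integral_norm (hTi x (hr.trans hx)) ?_
    refine (hconv x hx.le).congr fun m => ?_
    rw [setIntegral_congr_fun measurableSet_Ioi (hTn x m), integral_const_mul,
      hval x (hr.trans hx)]
    have := (hG m).ne'
    field_simp
  have hgl : ∀ x : ℝ, r < x → ∫ t in Ioi (0 : ℝ), Complex.exp (-(x : ℂ) * t) * ∑' m, G m t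
      = ∑' m, b m * ((x ^ (-(s m + 1)) : ℝ) : ℂ) := by
    intro x hx
    simp_rw [← tsum_mul_left]
    rw [← (hTs x hx).tsum_eq]
    refine tsum_congr fun m => ?_
    simp_rw [hTe]
    rw [integral_const_mul, integral_complex_ofReal, hval x (hr.trans hx)]
    have : (Real.Gamma (s m + 1) : ℂ) ≠ 0 := by exact_mod_cast (hG m).ne'
    rw [Complex.ofReal_mul]
    field_simp
  have hgi : ∀ x : ℝ, r < x →
      IntegrableOn (fun t : ℝ => Complex.exp (-(x : ℂ) * t) * ∑' m, G m t) (Ioi 0) := by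
    intro x hx
    have hmaj : IntegrableOn (fun t : ℝ => (∑' m, ‖b m‖ * r ^ (-s m)) * Real.exp ((r - x) * t))
        (Ioi 0) := (integrableOn_exp_mul_Ioi (by linarith) 0).const_mul _
    refine Integrable.mono' hmaj (lap_meas hgc x) ?_
    refine (ae_restrict_iff' measurableSet_Ioi).2 (Eventually.of_forall fun t ht => ?_)
    have ht : 0 ≤ t := le_of_lt ht
    rw [lap_norm (fun t => ∑' m, G m t)]
    have h1 : ‖∑' m, G m t‖ ≤ (∑' m, ‖b m‖ * r ^ (-s m)) * Real.exp (r * t) := by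
      rw [← tsum_mul_right]
      exact tsum_of_norm_bounded (hsum0.mul_right _).hasSum fun m =>
        (hGn m t ht).trans_le (hbd m t ht)
    calc _ ≤ Real.exp (-(x : ℂ).re * t) *
          ((∑' m, ‖b m‖ * r ^ (-s m)) * Real.exp (r * t)) := by gcongr
      _ = _ := by
        rw [mul_left_comm, ← Real.exp_add, Complex.ofReal_re]; ring_nf
  have hfin := lap_unique (h := fun t => f t - ∑' m, G m t) (hf.sub hgc) (r := r)
    (fun x hx => by
      simp_rw [mul_sub]
      exact (hint x hx).sub (hgi x hx))
    (fun x hx => by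
      simp_rw [mul_sub]
      rw [integral_sub (hint x hx) (hgi x hx), hlap x hx, hgl x hx, sub_self])
  intro t ht
  exact sub_eq_zero.1 (hfin t ht)

/-- Termwise inversion of a Laplace transform given by a series in powers of `z^{-1/k}`,
`k ∈ {1,2}`: if `f` is continuous on `[0,∞)` and its Laplace transform equals
`∑_{n=k+j}^∞ a_n z^{-n/k}` for `Re z > R`, the series converging for `|z| > R`, then
`f(t) = ∑_{n=j}^∞ a_{n+k} t^{n/k}/Γ(n/k + 1)`, the series converging for all `t ∈ ℂ`.
(The summation index `m` below corresponds to the paper's `n = m + j`.) -/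
theorem laplace_series_termwise_inversion
    (f : ℝ → ℂ) (hf : ContinuousOn f (Set.Ici 0))
    (k : ℕ) (hk : k = 1 ∨ k = 2) (j : ℕ) (R : ℝ) (hR : 0 ≤ R)
    (a : ℕ → ℂ)
    (hconv : ∀ z : ℂ, R < ‖z‖ →
      Summable (fun m : ℕ => a (m + k + j) * z ^ (-(((m + k + j : ℕ) : ℂ)) / (k : ℂ))))
    (hint : ∀ z : ℂ, R < z.re →
      MeasureTheory.IntegrableOn (fun t : ℝ => Complex.exp (-z * t) * f t) (Set.Ioi 0))
    (hlap : ∀ z : ℂ, R < z.re →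
      (∫ t in Set.Ioi (0 : ℝ), Complex.exp (-z * t) * f t)
        = ∑' m : ℕ, a (m + k + j) * z ^ (-(((m + k + j : ℕ) : ℂ)) / (k : ℂ))) :
    (∀ t : ℝ, 0 ≤ t →
      f t = ∑' m : ℕ,
        a (m + j + k) * ((t ^ (((m + j : ℕ) : ℝ) / (k : ℝ)) : ℝ) : ℂ) /
          ((Real.Gamma (((m + j : ℕ) : ℝ) / (k : ℝ) + 1) : ℝ) : ℂ)) ∧
    (∀ t : ℂ,
      Summable (fun m : ℕ =>
        a (m + j + k) * t ^ ((((m + j : ℕ) : ℂ)) / (k : ℂ)) /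
          ((Real.Gamma (((m + j : ℕ) : ℝ) / (k : ℝ) + 1) : ℝ) : ℂ))) := by
  have hk0 : (0 : ℝ) < k := by rcases hk with rfl | rfl <;> norm_num
  have hkc : (k : ℂ) ≠ 0 := by exact_mod_cast hk0.ne'
  set s : ℕ → ℝ := fun m => ((m + j : ℕ) : ℝ) / (k : ℝ) with hsdef
  have hexp : ∀ m : ℕ, -(((m + k + j : ℕ) : ℂ)) / (k : ℂ) = ((-(s m + 1) : ℝ) : ℂ) := by
    intro m
    rw [hsdef]; push_cast; field_simp; ring
  have hidx : ∀ m, a (m + k + j) = a (m + j + k) := fun m => by rw [add_right_comm]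
  have hterm : ∀ x : ℝ, 0 ≤ x → ∀ m : ℕ,
      a (m + k + j) * (x : ℂ) ^ (-(((m + k + j : ℕ) : ℂ)) / (k : ℂ)) =
        a (m + j + k) * ((x ^ (-(s m + 1)) : ℝ) : ℂ) := by
    intro x hx m
    rw [hexp, hidx, Complex.ofReal_cpow hx]
  obtain ⟨h1, h2⟩ := core_s18 f hf s (fun m => by positivity) (fun m => a (m + j + k)) (R + 1)
    (by linarith)
    (fun x hx => by
      have hx0 : 0 ≤ x := by linarith
      have := (hconv x (by
        rw [Complex.norm_real, Real.norm_eq_abs, abs_of_nonneg hx0]; linarith)).norm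
      refine this.congr fun m => ?_
      rw [hterm x hx0, norm_mul, Complex.norm_real, Real.norm_eq_abs,
        abs_of_nonneg (Real.rpow_nonneg hx0 _)])
    (fun x hx => hint x (by rw [Complex.ofReal_re]; linarith))
    (fun x hx => by
      rw [hlap x (by rw [Complex.ofReal_re]; linarith)]
      exact tsum_congr fun m => hterm x (by linarith) m)
  refine ⟨h1, fun t => ?_⟩
  refine Summable.of_norm ((h2 ‖t‖ (norm_nonneg t)).congr fun m => ?_)
  have hG : 0 < Real.Gamma (s m + 1) := Real.Gamma_pos_of_pos (by positivity)
  have he : (((m + j : ℕ) : ℂ)) / (k : ℂ) = ((s m : ℝ) : ℂ) := by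
    rw [hsdef]; push_cast; rfl
  rw [he, norm_div, norm_mul, Complex.norm_cpow_real, Complex.norm_real, Real.norm_eq_abs,
    abs_of_pos hG, mul_div_assoc]
end
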